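/- Let ℓ ≥ 4 be an even integer, set r = ℓ/2, let d ≥ 1 be an integer, set g = gcd(d, r) and r_α = r/g. Then for every complex number z the following are equivalent: (i) for every integer k with 1 ≤ k ≤ r_α − 1, the number 2(z − k·d) is not an integer multiple of ℓ; (ii) z lies in (ℂ ∖ gℤ) ∪ rℤ, where gℤ = { g·m : m ∈ ℤ } and rℤ = { r·m : m ∈ ℤ } are regarded as subsets of ℂ. -/

import Mathlib

/-!
Modulo `r`, the multiples of `d` are exactly the multiples of `g = gcd(d, r)`, and `k d` depends
only on `k` modulo `r / g`. Hence `d, 2d, …, (r / g - 1) d` represent precisely the nonzero classes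
of `gℤ / rℤ`, while `2 (z - k d) ∈ 2rℤ` says that `z` is an integer congruent to `k d` modulo `r`.
-/

theorem exists_mul_modEq_iff_gcd_dvd {d r n : ℤ} :
    (∃ k, k * d ≡ n [ZMOD r]) ↔ (Int.gcd d r : ℤ) ∣ n := by
  constructor
  · rintro ⟨k, hk⟩
    exact ((hk.of_dvd (Int.gcd_dvd_right d r)).dvd_iff).mp ((Int.gcd_dvd_left d r).mul_left k)
  · rintro ⟨m, rfl⟩
    refine ⟨Int.gcdA d r * m, Int.modEq_iff_add_fac.mpr ⟨Int.gcdB d r * m, ?_⟩⟩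
    rw [Int.gcd_eq_gcd_ab]
    ring

theorem mul_modEq_mul_right_iff {r : ℤ} (hr : r ≠ 0) {a b d : ℤ} :
    a * d ≡ b * d [ZMOD r] ↔ a ≡ b [ZMOD r / Int.gcd d r] := by
  have hg : (Int.gcd d r : ℤ) ≠ 0 := by exact_mod_cast (Int.gcd_pos_of_ne_zero_right d hr).ne'
  rw [Int.modEq_iff_dvd, Int.modEq_iff_dvd, ← sub_mul, mul_comm, ← Int.dvd_gcd_mul_iff_dvd_mul,
    Int.gcd_comm r d, Int.ediv_dvd_iff_dvd_mul (Int.gcd_dvd_right d r) hg]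

theorem exists_mem_Ico_mul_modEq_iff {r : ℤ} (hr : 0 < r) {d n : ℤ} :
    (∃ k ∈ Set.Ico 1 (r / Int.gcd d r), k * d ≡ n [ZMOD r]) ↔
      (Int.gcd d r : ℤ) ∣ n ∧ ¬ r ∣ n := by
  have hdvd (k : ℤ) (hk : k * d ≡ n [ZMOD r]) : r ∣ n ↔ r / Int.gcd d r ∣ k := by
    rw [← hk.dvd_iff, ← Int.modEq_zero_iff_dvd, ← Int.modEq_zero_iff_dvd,
      ← mul_modEq_mul_right_iff hr.ne', zero_mul]
  constructor
  · rintro ⟨k, ⟨hk1, hk2⟩, hk⟩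
    refine ⟨exists_mul_modEq_iff_gcd_dvd.mp ⟨k, hk⟩, fun hn ↦ ?_⟩
    exact hk2.not_ge (Int.le_of_dvd hk1 ((hdvd k hk).mp hn))
  · rintro ⟨hg, hn⟩
    obtain ⟨k, hk⟩ := exists_mul_modEq_iff_gcd_dvd.mpr hg
    have hpos : 0 < r / Int.gcd d r :=
      Int.ediv_pos_of_pos_of_dvd hr (by positivity) (Int.gcd_dvd_right d r)
    have hmod : k % (r / Int.gcd d r) ≠ 0 := fun h ↦
      hn ((hdvd k hk).mpr (Int.dvd_of_emod_eq_zero h))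
    refine ⟨k % (r / Int.gcd d r), ⟨?_, Int.emod_lt_of_pos k hpos⟩, ?_⟩
    · exact (Int.emod_nonneg k hpos.ne').lt_of_ne' hmod
    · exact ((mul_modEq_mul_right_iff hr.ne').mpr (Int.mod_modEq k _)).trans hk

section CharZero

variable {K : Type*} [Ring K] [CharZero K]

theorem exists_sub_mul_eq_intCast_mul_iff {r : ℤ} (hr : 0 < r) {d : ℤ} {z : K} :
    (∃ k ∈ Set.Ico 1 (r / Int.gcd d r), ∃ m : ℤ, z - (k : K) * d = (r : K) * m) ↔
      (∃ m : ℤ, z = ((Int.gcd d r : ℤ) : K) * m) ∧ ¬ ∃ m : ℤ, z = (r : K) * m := by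
  by_cases hz : ∃ n : ℤ, z = n
  · obtain ⟨n, rfl⟩ := hz
    have hmodEq := exists_mem_Ico_mul_modEq_iff hr (d := d) (n := n)
    simp only [Int.modEq_iff_dvd, dvd_def] at hmodEq
    exact_mod_cast hmodEq
  · constructor
    · rintro ⟨k, -, m, hm⟩
      exact absurd ⟨r * m + k * d, by push_cast; exact sub_eq_iff_eq_add.mp hm⟩ hz
    · rintro ⟨⟨m, hm⟩, -⟩
      exact absurd ⟨Int.gcd d r * m, by rw [hm, Int.cast_mul]⟩ hz

theorem typicality_even_general [NoZeroDivisors K] {r : ℤ} (hr : 0 < r) (d : ℤ) (z : K) :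
    (∀ k : ℤ, 1 ≤ k → k ≤ r / Int.gcd d r - 1 →
        ¬ ∃ m : ℤ, 2 * (z - (k : K) * (d : K)) = ((2 * r : ℤ) : K) * (m : K)) ↔
      z ∈ (Set.univ \ {x : K | ∃ m : ℤ, x = ((Int.gcd d r : ℤ) : K) * (m : K)}) ∪
            {x : K | ∃ m : ℤ, x = (r : K) * (m : K)} := by
  have hcancel (x : K) (m : ℤ) : 2 * x = ((2 * r : ℤ) : K) * m ↔ x = r * m := by
    rw [Int.cast_mul, Int.cast_ofNat, mul_assoc, mul_right_inj' two_ne_zero]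
  have hatypical := (exists_sub_mul_eq_intCast_mul_iff hr (d := d) (z := z)).not
  rw [not_and_or, not_not] at hatypical
  simp only [hcancel, Set.mem_union, Set.mem_sdiff, Set.mem_univ, true_and, Set.mem_ofPred_eq,
    Int.le_sub_one_iff]
  simpa only [Set.mem_Ico, not_exists, not_and, and_imp] using hatypical

end CharZero

/-- typicality criterion, even case: for `ℓ ≥ 4` even, `r = ℓ/2`,
`d ≥ 1`, `g = gcd(d, r)`, `r_α = r/g`, and any `z ∈ ℂ`:
`2(z − k·d)` is not an integer multiple of `ℓ` for all `1 ≤ k ≤ r_α − 1`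
iff `z ∈ (ℂ ∖ gℤ) ∪ rℤ`. -/
theorem typicality_even (ℓ : ℤ) (hℓ : 4 ≤ ℓ) (hev : Even ℓ)
    (r : ℤ) (hr : r = ℓ / 2) (d : ℤ) (hd : 1 ≤ d)
    (g : ℤ) (hg : g = Int.gcd d r) (rα : ℤ) (hrα : rα = r / g) (z : ℂ) :
    (∀ k : ℤ, 1 ≤ k → k ≤ rα - 1 →
        ¬ ∃ m : ℤ, 2 * (z - (k : ℂ) * (d : ℂ)) = (ℓ : ℂ) * (m : ℂ)) ↔
      z ∈ (Set.univ \ {x : ℂ | ∃ m : ℤ, x = (g : ℂ) * (m : ℂ)}) ∪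
            {x : ℂ | ∃ m : ℤ, x = (r : ℂ) * (m : ℂ)} := by
  obtain ⟨s, rfl⟩ := hev.two_dvd
  obtain rfl : r = s := by omega
  subst hg hrα
  exact typicality_even_general (by omega) d z
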